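/- Let k ≥ 1 and let G = (V,E) be a finite claw-free simple graph whose largest clique has size at most k and each of whose connected components contains a simplicial clique; let K be a simplicial clique of G, and let G + u_K be the graph obtained from G by adding a new vertex u_K adjacent exactly to the vertices of K. Let P be a path in G + u_K starting at u_K with endpoint x (possibly x = u_K when P is a single vertex), designate x as the active endpoint, and set A_{Px} = V(P) ∪ ∂(V(P) ∖ {x}) and U_{Px} = V(G + u_K) ∖ A_{Px}. Then for every assignment of weights λ = (λ_v)_{v∈V} with λ_v ∈ R(k) for all v ∈ V: (i) Z(U_{Px}) ≠ 0 and Z(U_{Px} ∖ ∂x) ≠ 0; and (ii) Re( Z(U_{Px}) / Z(U_{Px} ∖ ∂x) ) ≥ 1/2. -/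

import Mathlib

attribute [local instance] Classical.propDecidable

/-- Multivariate independence polynomial of the induced subgraph `G[W]`:
the sum over all independent sets `S ⊆ W` of `∏ v ∈ S, lam v`. -/
noncomputable def indepPolyOn {V : Type*} [Fintype V] (G : SimpleGraph V)
    (lam : V → ℂ) (W : Finset V) : ℂ :=
  ∑ S ∈ W.powerset, if (∀ u ∈ S, ∀ v ∈ S, ¬ G.Adj u v) then ∏ v ∈ S, lam v else 0

/-- Multivariate independence polynomial `Z_{G,λ}`. -/
noncomputable def indepPoly {V : Type*} [Fintype V] (G : SimpleGraph V)
    (lam : V → ℂ) : ℂ :=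
  indepPolyOn G lam Finset.univ

/-- The subdivided claw `S_{t,t,t}`: three paths of length `t` sharing one common
endpoint (the vertex `none`). -/
def subdividedClaw (t : ℕ) : SimpleGraph (Option (Fin 3 × Fin t)) :=
  SimpleGraph.fromRel (fun a b =>
    match a, b with
    | none, some (_, j) => (j : ℕ) = 0
    | some (i, j), some (i', j') => i = i' ∧ (j : ℕ) + 1 = (j' : ℕ)
    | _, _ => False)

/-- The open parabolic region `R(k) = {z : (Im z)² < (1/k)·Re z + 1/(4k²)}`. -/
def parabR (k : ℝ) : Set ℂ := {z : ℂ | z.im ^ 2 < z.re / k + 1 / (4 * k ^ 2)}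

/-- The closed halfplane `H(t) = {z : Re z ≥ t}`. -/
def halfH (t : ℝ) : Set ℂ := {z : ℂ | t ≤ z.re}


/-- `K` is a simplicial clique in `G`: `K` is a clique and, for every `v ∈ K`,
the neighbours of `v` outside `K` induce a clique. -/
def IsSimplicialClique {V : Type*} (G : SimpleGraph V) (K : Set V) : Prop :=
  G.IsClique K ∧ ∀ v ∈ K, G.IsClique {w : V | G.Adj v w ∧ w ∉ K}

/-- Every connected component of `G` contains a (nonempty) simplicial clique. -/
def EveryComponentHasSimplicialClique {V : Type*} (G : SimpleGraph V) : Prop :=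
  ∀ c : G.ConnectedComponent, ∃ K : Set V, K.Nonempty ∧
    (∀ v ∈ K, G.connectedComponentMk v = c) ∧ IsSimplicialClique G K

/-- The graph `G + u_K`: a new vertex (`none`) is added to `G` and joined to
exactly the vertices of `K`. -/
def addVertex {V : Type*} (G : SimpleGraph V) (K : Set V) :
    SimpleGraph (Option V) :=
  SimpleGraph.fromRel (fun a b =>
    match a, b with
    | some u, some v => G.Adj u v
    | none, some v => v ∈ K
    | _, _ => False)

/-- The boundary `∂X`: vertices outside `X` with a neighbour in `X`. -/
noncomputable def nbd {W : Type*} [Fintype W] (H : SimpleGraph W)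
    (X : Finset W) : Finset W :=
  Finset.univ.filter (fun v => v ∉ X ∧ ∃ x ∈ X, H.Adj v x)


/-- Vertex recursion. -/
lemma ip_insert {V : Type*} [Fintype V] (G : SimpleGraph V) (lam : V → ℂ)
    (W : Finset V) (y : V) (hy : y ∉ W) :
    indepPolyOn G lam (insert y W) = indepPolyOn G lam W +
      lam y * indepPolyOn G lam (W.filter (fun v => ¬ G.Adj y v)) := by
  unfold indepPolyOn
  rw [Finset.sum_powerset_insert hy]
  congr 1
  rw [Finset.mul_sum]
  symm
  apply Finset.sum_subset_zero_on_sdiff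
  · exact Finset.powerset_mono.2 (Finset.filter_subset _ _)
  · intro S hS
    rw [Finset.mem_sdiff, Finset.mem_powerset, Finset.mem_powerset] at hS
    rw [if_neg]
    intro h
    apply hS.2
    intro v hv
    exact Finset.mem_filter.2 ⟨hS.1 hv,
      h y (Finset.mem_insert_self _ _) v (Finset.mem_insert_of_mem hv)⟩
  · intro S hS
    rw [Finset.mem_powerset] at hS
    have hyS : y ∉ S := fun h => hy (Finset.mem_filter.1 (hS h)).1
    rw [Finset.prod_insert hyS]
    have : (∀ u ∈ insert y S, ∀ v ∈ insert y S, ¬ G.Adj u v) ↔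
        (∀ u ∈ S, ∀ v ∈ S, ¬ G.Adj u v) := by
      constructor
      · intro h u hu v hv
        exact h u (Finset.mem_insert_of_mem hu) v (Finset.mem_insert_of_mem hv)
      · intro h u hu v hv
        rcases Finset.mem_insert.1 hu with hu1 | hu1 <;>
          rcases Finset.mem_insert.1 hv with hv1 | hv1
        · rw [hu1, hv1]
          exact G.irrefl
        · rw [hu1]
          exact (Finset.mem_filter.1 (hS hv1)).2
        · rw [hv1]
          exact fun h' => (Finset.mem_filter.1 (hS hu1)).2 h'.symm
        · exact h u hu1 v hv1
    by_cases h : (∀ u ∈ S, ∀ v ∈ S, ¬ G.Adj u v)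
    · rw [if_pos h, if_pos (this.2 h)]
    · rw [if_neg h, if_neg (fun h' => h (this.1 h')), mul_zero]

lemma ip_clique {V : Type*} [Fintype V] (G : SimpleGraph V) (lam : V → ℂ)
    (W N : Finset V) (hd : Disjoint W N) (hN : G.IsClique (N : Set V)) :
    indepPolyOn G lam (W ∪ N) = indepPolyOn G lam W +
      ∑ y ∈ N, lam y * indepPolyOn G lam (W.filter (fun v => ¬ G.Adj y v)) := by
  induction N using Finset.induction_on with
  | empty => simp
  | insert y N hy ih =>
    rw [Finset.disjoint_insert_right] at hd
    have hN' : G.IsClique (N : Set V) := hN.subset (by simp)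
    rw [Finset.union_insert, ip_insert _ _ _ _ (by simp [hd.1, hy]), ih hd.2 hN',
      Finset.sum_insert hy]
    have : (W ∪ N).filter (fun v => ¬ G.Adj y v) = W.filter (fun v => ¬ G.Adj y v) := by
      ext v
      simp only [Finset.mem_filter, Finset.mem_union]
      constructor
      · rintro ⟨h | h, h'⟩
        · exact ⟨h, h'⟩
        · exfalso
          apply h'
          apply hN (by simp) (by simp [h])
          rintro rfl
          exact hy h
      · rintro ⟨h, h'⟩
        exact ⟨Or.inl h, h'⟩
    rw [this]
    ring

/-- `N` is a simplicial clique of the induced subgraph on `W`. -/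
def SimpIn {V : Type*} (G : SimpleGraph V) (W N : Finset V) : Prop :=
  N ⊆ W ∧ G.IsClique (N : Set V) ∧
    ∀ y ∈ N, G.IsClique {w : V | G.Adj y w ∧ w ∈ W ∧ w ∉ N}

def ClawFree' {V : Type*} (G : SimpleGraph V) : Prop :=
  ∀ c a b d, G.Adj c a → G.Adj c b → G.Adj c d → b ≠ d → ¬ G.Adj a b → ¬ G.Adj a d →
    a ≠ b → a ≠ d → G.Adj b d

lemma clawFree_of {V : Type*} (G : SimpleGraph V) (h : IsEmpty (subdividedClaw 1 ↪g G)) :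
    ClawFree' G := by
  intro c a b d ca cb cd bd nab nad ab ad
  by_contra nbd'
  apply h.false
  have nba : ¬ G.Adj b a := fun h => nab h.symm
  have nda : ¬ G.Adj d a := fun h => nad h.symm
  have ndb : ¬ G.Adj d b := fun h => nbd' h.symm
  have inj : Function.Injective
      (fun o : Option (Fin 3 × Fin 1) => o.elim c (fun p => ![a, b, d] p.1)) := ?inj
  have hadj : ∀ s t : Option (Fin 3 × Fin 1), G.Adj (s.elim c (fun p => ![a, b, d] p.1))
      (t.elim c (fun p => ![a, b, d] p.1)) ↔ (subdividedClaw 1).Adj s t := ?hadj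
  exact ⟨⟨_, inj⟩, fun {s t} => hadj s t⟩
  case inj =>
    rintro (_ | ⟨i, j⟩) (_ | ⟨i', j'⟩) hh
    · rfl
    · fin_cases i' <;> simp at hh <;> subst hh <;> simp_all
    · fin_cases i <;> simp at hh <;> subst hh <;> simp_all
    · obtain rfl := Subsingleton.elim j j'
      fin_cases i <;> fin_cases i' <;> simp at hh ⊢ <;> first | exact ab hh | exact ad hh | exact bd hh | exact ab hh.symm | exact ad hh.symm | exact bd hh.symm
  case hadj =>
    rintro (_ | ⟨i, j⟩) (_ | ⟨i', j'⟩)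
    · simp
    · fin_cases i' <;> simp [subdividedClaw, ca, cb, cd]
    · fin_cases i <;> simp [subdividedClaw, ca.symm, cb.symm, cd.symm]
    · obtain rfl := Subsingleton.elim j j'
      fin_cases i <;> fin_cases i' <;> simp [subdividedClaw, nab, nad, nbd', nba, nda, ndb]

/-- neighbours of an outside vertex form a simplicial clique as soon as they form a clique -/
lemma simpIn_nbr {V : Type*} (G : SimpleGraph V) (hc : ClawFree' G) (W : Finset V) (v : V)
    (hv : v ∉ W) (hcl : G.IsClique {w : V | G.Adj v w ∧ w ∈ W}) :
    SimpIn G W (W.filter (fun w => G.Adj v w)) := by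
  refine ⟨Finset.filter_subset _ _, ?_, ?_⟩
  · apply hcl.subset
    intro w hw
    have := Finset.mem_filter.1 (Finset.mem_coe.1 hw)
    exact ⟨this.2, this.1⟩
  · intro y hy a ha b hb hab
    obtain ⟨ha1, ha2, ha3⟩ := ha
    obtain ⟨hb1, hb2, hb3⟩ := hb
    have hvy := (Finset.mem_filter.1 hy).2
    exact hc y v a b hvy.symm ha1 hb1 hab
      (fun h => ha3 (Finset.mem_filter.2 ⟨ha2, h⟩))
      (fun h => hb3 (Finset.mem_filter.2 ⟨hb2, h⟩))
      (fun h => hv (h ▸ ha2)) (fun h => hv (h ▸ hb2))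

lemma exists_simp_walk {V : Type*} (G : SimpleGraph V) (hc : ClawFree' G) (W : Finset V)
    {v w : V} (p : G.Walk v w) (hw : w ∈ W) (hv : v ∉ W)
    (hcl : G.IsClique {w : V | G.Adj v w ∧ w ∈ W}) :
    ∃ N, N.Nonempty ∧ SimpIn G W N := by
  induction p with
  | nil => exact absurd hw hv
  | @cons u v' w h p ih =>
    by_cases hne : (W.filter (fun w => G.Adj u w)).Nonempty
    · exact ⟨_, hne, simpIn_nbr G hc W u hv hcl⟩
    · have hno : ∀ z ∈ W, ¬ G.Adj u z := fun z hz hz' => hne ⟨z, Finset.mem_filter.2 ⟨hz, hz'⟩⟩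
      refine ih hw (fun h' => hno _ h' h) ?_
      intro a ha b hb hab
      exact hc v' u a b h.symm ha.1 hb.1 hab (hno a ha.2) (hno b hb.2)
        (fun h => hv (h ▸ ha.2)) (fun h => hv (h ▸ hb.2))

lemma simpIn_of_simplicial {V : Type*} (G : SimpleGraph V) (K : Set V)
    (hK : IsSimplicialClique G K) (W : Finset V) : SimpIn G W (W.filter (fun v => v ∈ K)) := by
  refine ⟨Finset.filter_subset _ _, ?_, ?_⟩
  · apply hK.1.subset
    intro w hw
    exact (Finset.mem_filter.1 (Finset.mem_coe.1 hw)).2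
  · intro y hy
    apply (hK.2 y (Finset.mem_filter.1 hy).2).subset
    rintro w ⟨h1, h2, h3⟩
    exact ⟨h1, fun h => h3 (Finset.mem_filter.2 ⟨h2, h⟩)⟩

lemma exists_simp {V : Type*} (G : SimpleGraph V) (hc : ClawFree' G)
    (hs : EveryComponentHasSimplicialClique G) (W : Finset V) (hW : W.Nonempty) :
    ∃ N, N.Nonempty ∧ SimpIn G W N := by
  obtain ⟨w, hw⟩ := hW
  obtain ⟨K, ⟨a, ha⟩, hKc, hK⟩ := hs (G.connectedComponentMk w)
  by_cases hne : (W.filter (fun v => v ∈ K)).Nonempty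
  · exact ⟨_, hne, simpIn_of_simplicial G K hK W⟩
  · have hno : ∀ z ∈ W, z ∉ K := fun z hz hz' => hne ⟨z, Finset.mem_filter.2 ⟨hz, hz'⟩⟩
    obtain ⟨p⟩ := SimpleGraph.ConnectedComponent.exact (hKc a ha)
    refine exists_simp_walk G hc W p hw (fun h => hno a h ha) ?_
    apply (hK.2 a ha).subset
    rintro z ⟨h1, h2⟩
    exact ⟨h1, hno z h2⟩

lemma parab_bound (k : ℕ) (hk : 1 ≤ k) (l r : ℂ) (hl : l ∈ parabR k) (hr : 1 / 2 ≤ r.re) :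
    -(1 / (2 * (k : ℝ))) ≤ (l * r⁻¹).re := by
  have hk0 : (0 : ℝ) < k := by exact_mod_cast hk
  have hl' : l.im ^ 2 < l.re / k + 1 / (4 * (k : ℝ) ^ 2) := hl
  have hr0 : r ≠ 0 := by
    rintro rfl
    norm_num at hr
  have hw : ‖r⁻¹ - 1‖ ≤ 1 := by
    have h1 : r⁻¹ - 1 = (1 - r) / r := by field_simp
    rw [h1, norm_div, div_le_one (norm_pos_iff.2 hr0)]
    apply (sq_le_sq₀ (norm_nonneg _) (norm_nonneg _)).1
    rw [Complex.sq_norm, Complex.sq_norm, Complex.normSq_apply, Complex.normSq_apply]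
    simp
    nlinarith
  have hnl : ‖l‖ ≤ l.re + 1 / (2 * (k : ℝ)) := by
    have e : l.re / k + 1 / (4 * (k : ℝ) ^ 2) = (l.re + 1 / (2 * (k : ℝ))) ^ 2 - l.re ^ 2 := by
      field_simp
      ring
    have hp : 0 ≤ l.re + 1 / (2 * (k : ℝ)) := by
      have h2 : 0 < l.re / k + 1 / (4 * (k : ℝ) ^ 2) := lt_of_le_of_lt (sq_nonneg _) hl'
      have h3 : l.re / k + 1 / (4 * (k : ℝ) ^ 2) = (l.re + 1 / (4 * (k : ℝ))) / k := by
        field_simp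
      rw [h3] at h2
      have h4 := (div_pos_iff_of_pos_right hk0).1 h2
      have h5 : 1 / (2 * (k : ℝ)) = 1 / (4 * (k : ℝ)) + 1 / (4 * (k : ℝ)) := by
        field_simp
        norm_num
      have h6 : 0 < 1 / (4 * (k : ℝ)) := by positivity
      linarith
    apply (sq_le_sq₀ (norm_nonneg _) hp).1
    rw [Complex.sq_norm, Complex.normSq_apply]
    nlinarith
  have h7 : l * r⁻¹ = l + l * (r⁻¹ - 1) := by ring
  have h8 : |(l * (r⁻¹ - 1)).re| ≤ ‖l‖ := by
    refine (Complex.abs_re_le_norm _).trans ?_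
    rw [norm_mul]
    exact mul_le_of_le_one_right (norm_nonneg _) hw
  rw [h7, Complex.add_re]
  have := (abs_le.1 h8).1
  linarith

lemma main_ind {V : Type*} [Fintype V] (k : ℕ) (hk : 1 ≤ k) (G : SimpleGraph V)
    (hc : ClawFree' G)
    (hclique : ∀ s : Finset V, G.IsClique (s : Set V) → s.card ≤ k)
    (hs : EveryComponentHasSimplicialClique G)
    (lam : V → ℂ) (hlam : ∀ v, lam v ∈ parabR k) (n : ℕ) :
    ∀ W N : Finset V, W.card = n → SimpIn G W N →
      (indepPolyOn G lam W ≠ 0 ∧ indepPolyOn G lam (W \ N) ≠ 0) ∧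
      1 / 2 ≤ (indepPolyOn G lam W / indepPolyOn G lam (W \ N)).re := by
  have hk0 : (0 : ℝ) < k := by exact_mod_cast hk
  induction n using Nat.strong_induction_on with
  | _ n ih =>
  have key : ∀ W N : Finset V, W.card = n → N.Nonempty → SimpIn G W N →
      (indepPolyOn G lam W ≠ 0 ∧ indepPolyOn G lam (W \ N) ≠ 0) ∧
      1 / 2 ≤ (indepPolyOn G lam W / indepPolyOn G lam (W \ N)).re := by
    rintro W N hWn ⟨y0, hy0⟩ ⟨hNW, hN, hNs⟩
    have hlt : (W \ N).card < n := by
      rw [← hWn]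
      apply Finset.card_lt_card
      refine ⟨Finset.sdiff_subset, fun h => ?_⟩
      exact (Finset.mem_sdiff.1 (h (hNW hy0))).2 hy0
    have step : ∀ y ∈ N, (indepPolyOn G lam (W \ N) ≠ 0 ∧
        indepPolyOn G lam ((W \ N).filter (fun v => ¬ G.Adj y v)) ≠ 0) ∧
        1 / 2 ≤ (indepPolyOn G lam (W \ N) /
          indepPolyOn G lam ((W \ N).filter (fun v => ¬ G.Adj y v))).re := by
      intro y hy
      have := ih _ hlt (W \ N) ((W \ N).filter (fun v => G.Adj y v)) rfl
        (simpIn_nbr G hc _ y (fun h => (Finset.mem_sdiff.1 h).2 hy)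
          ((hNs y hy).subset (by
            rintro z ⟨h1, h2⟩
            exact ⟨h1, Finset.mem_sdiff.1 h2⟩)))
      have e : (W \ N) \ ((W \ N).filter (fun v => G.Adj y v)) =
          (W \ N).filter (fun v => ¬ G.Adj y v) := by
        rw [Finset.filter_not]
      rw [e] at this
      exact this
    have h0 := (step y0 hy0).1.1
    have hrec := ip_clique G lam (W \ N) N Finset.sdiff_disjoint hN
    rw [Finset.sdiff_union_of_subset hNW] at hrec
    have hre : 1 / 2 ≤ (indepPolyOn G lam W / indepPolyOn G lam (W \ N)).re := by
      rw [hrec, add_div, div_self h0, Complex.add_re, Finset.sum_div, Complex.re_sum]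
      have hb : ∀ y ∈ N, -(1 / (2 * (k : ℝ))) ≤ (lam y *
          indepPolyOn G lam ((W \ N).filter (fun v => ¬ G.Adj y v)) /
            indepPolyOn G lam (W \ N)).re := by
        intro y hy
        have := parab_bound k hk (lam y) _ (hlam y) (step y hy).2
        rw [inv_div, ← mul_div_assoc] at this
        exact this
      have hsum := Finset.card_nsmul_le_sum N _ _ hb
      have hcard : (N.card : ℝ) ≤ k := by exact_mod_cast hclique N hN
      rw [nsmul_eq_mul] at hsum
      have h9 : (N.card : ℝ) * (1 / (2 * (k : ℝ))) ≤ 1 / 2 := by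
        calc (N.card : ℝ) * (1 / (2 * (k : ℝ))) ≤ k * (1 / (2 * (k : ℝ))) := by gcongr
          _ = 1 / 2 := by field_simp
      rw [Complex.one_re]
      linarith
    refine ⟨⟨?_, h0⟩, hre⟩
    intro hz
    rw [hz, zero_div, Complex.zero_re] at hre
    norm_num at hre
  intro W N hWn hN
  by_cases hne : N.Nonempty
  · exact key W N hWn hne hN
  · rw [Finset.not_nonempty_iff_eq_empty] at hne
    subst hne
    rw [Finset.sdiff_empty]
    have hZ : indepPolyOn G lam W ≠ 0 := by
      by_cases hW : W.Nonempty
      · obtain ⟨M, hM, hM'⟩ := exists_simp G hc hs W hW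
        exact (key W M hWn hM hM').1.1
      · rw [Finset.not_nonempty_iff_eq_empty] at hW
        subst hW
        simp [indepPolyOn]
    refine ⟨⟨hZ, hZ⟩, ?_⟩
    rw [div_self hZ, Complex.one_re]
    norm_num

lemma addVertex_some {V : Type*} (G : SimpleGraph V) (K : Set V) (u v : V) :
    (addVertex G K).Adj (some u) (some v) ↔ G.Adj u v := by
  simp only [addVertex, SimpleGraph.fromRel_adj]
  constructor
  · rintro ⟨_, h | h⟩
    · exact h
    · exact h.symm
  · intro h
    exact ⟨fun e => h.ne (Option.some.inj e), Or.inl h⟩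

lemma addVertex_none {V : Type*} (G : SimpleGraph V) (K : Set V) (v : V) :
    (addVertex G K).Adj (some v) none ↔ v ∈ K := by
  simp [addVertex, SimpleGraph.fromRel_adj]

lemma ip_map {V : Type*} [Fintype V] (G : SimpleGraph V) (K : Set V) (lam : V → ℂ)
    (W : Finset V) :
    indepPolyOn (addVertex G K) (fun w => w.elim 0 lam) (W.map Function.Embedding.some) =
      indepPolyOn G lam W := by
  induction hn : W.card using Nat.strong_induction_on generalizing W with
  | _ n ih =>
  rcases W.eq_empty_or_nonempty with rfl | ⟨y, hy⟩
  · simp [indepPolyOn]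
  · obtain ⟨W, hyW, rfl⟩ : ∃ W', y ∉ W' ∧ insert y W' = W :=
      ⟨W.erase y, by simp, Finset.insert_erase hy⟩
    rw [Finset.card_insert_of_notMem hyW] at hn
    have e := ip_insert (addVertex G K) (fun w => w.elim 0 lam)
      (W.map Function.Embedding.some) (some y) (by simpa using hyW)
    have e2 : (insert y W).map Function.Embedding.some =
        insert (some y) (W.map Function.Embedding.some) := by
      ext z
      simp [eq_comm]
    have e3 : (W.map Function.Embedding.some).filter (fun v => ¬ (addVertex G K).Adj (some y) v)
        = (W.filter (fun v => ¬ G.Adj y v)).map Function.Embedding.some := by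
      ext z
      rcases z with _ | z <;> simp [addVertex_some]
    have e4 : indepPolyOn (addVertex G K) (fun w => w.elim 0 lam)
        ((insert y W).map Function.Embedding.some) =
        indepPolyOn (addVertex G K) (fun w => w.elim 0 lam) (W.map Function.Embedding.some) +
        lam y * indepPolyOn (addVertex G K) (fun w => w.elim 0 lam)
          ((W.map Function.Embedding.some).filter
            (fun v => ¬ (addVertex G K).Adj (some y) v)) := by
      rw [e2]
      rw [Option.elim_some] at e
      convert e
    rw [e4, e3, ip_insert G _ _ _ hyW, ih _ (by omega) W rfl]
    rw [ih _ (lt_of_le_of_lt (Finset.card_filter_le _ _) (by omega))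
      (W.filter (fun v => ¬ G.Adj y v)) rfl]

lemma mem_nbd' {W : Type*} [Fintype W] (H : SimpleGraph W) (X : Finset W) (v : W) :
    v ∈ nbd H X ↔ v ∉ X ∧ ∃ x ∈ X, H.Adj v x := by
  simp [nbd]

/-- let `G` be finite, claw-free, with largest clique of size at
most `k` and a simplicial clique in every component; let `K` be a simplicial
clique of `G` and `P` a path in `G + u_K` from `u_K` to its active endpoint
`x`.  With `A_{Px} = V(P) ∪ ∂(V(P) ∖ {x})` and `U_{Px}` its complement, if all
weights lie in `R(k)` then `Z(U_{Px}) ≠ 0`, `Z(U_{Px} ∖ ∂x) ≠ 0` and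
`Re(Z(U_{Px}) / Z(U_{Px} ∖ ∂x)) ≥ 1/2`. -/
theorem stmt9 {V : Type} [Fintype V] (k : ℕ) (hk : 1 ≤ k) (G : SimpleGraph V)
    (hclaw : IsEmpty (subdividedClaw 1 ↪g G))
    (hclique : ∀ s : Finset V, G.IsClique (s : Set V) → s.card ≤ k)
    (hsimp : EveryComponentHasSimplicialClique G)
    (K : Set V) (hKne : K.Nonempty) (hK : IsSimplicialClique G K)
    (x : Option V) (P : (addVertex G K).Walk none x) (hP : P.IsPath)
    (lam : V → ℂ) (hlam : ∀ v, lam v ∈ parabR k) :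
    (indepPolyOn (addVertex G K) (fun w => w.elim 0 lam)
        (Finset.univ \ (P.support.toFinset ∪
          nbd (addVertex G K) (P.support.toFinset \ {x}))) ≠ 0 ∧
      indepPolyOn (addVertex G K) (fun w => w.elim 0 lam)
        ((Finset.univ \ (P.support.toFinset ∪
          nbd (addVertex G K) (P.support.toFinset \ {x}))) \
            nbd (addVertex G K) {x}) ≠ 0) ∧
    1 / 2 ≤ (indepPolyOn (addVertex G K) (fun w => w.elim 0 lam)
        (Finset.univ \ (P.support.toFinset ∪
          nbd (addVertex G K) (P.support.toFinset \ {x}))) /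
      indepPolyOn (addVertex G K) (fun w => w.elim 0 lam)
        ((Finset.univ \ (P.support.toFinset ∪
          nbd (addVertex G K) (P.support.toFinset \ {x}))) \
            nbd (addVertex G K) {x})).re := by
  have hc := clawFree_of G hclaw
  set U : Finset (Option V) := Finset.univ \ (P.support.toFinset ∪
    nbd (addVertex G K) (P.support.toFinset \ {x})) with hU
  have hUno : ∀ z ∈ U, z ∉ P.support ∧ ∀ p ∈ P.support, p ≠ x → ¬ (addVertex G K).Adj z p := by
    intro z hz
    rw [hU, Finset.mem_sdiff, Finset.mem_union, not_or] at hz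
    have h1 : z ∉ P.support := fun h => hz.2.1 (List.mem_toFinset.2 h)
    refine ⟨h1, fun p hp hpx hadj => hz.2.2 ?_⟩
    refine (mem_nbd' _ _ _).2 ⟨?_, p, ?_, hadj⟩
    · exact fun h => h1 (List.mem_toFinset.1 (Finset.mem_sdiff.1 h).1)
    · exact Finset.mem_sdiff.2 ⟨List.mem_toFinset.2 hp, by simpa using hpx⟩
  set W : Finset V := Finset.univ.filter (fun v => some v ∈ U) with hW
  have hWm : ∀ v, v ∈ W ↔ some v ∈ U := fun v => by simp [hW]
  have hnone : none ∉ U := fun h => (hUno _ h).1 P.start_mem_support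
  set N : Finset V := W.filter (fun v => (addVertex G K).Adj (some v) x) with hN
  have eU : U = W.map Function.Embedding.some := by
    ext z
    rcases z with _ | z
    · simp [hnone]
    · simp [hWm]
  have eN : U \ nbd (addVertex G K) {x} = (W \ N).map Function.Embedding.some := by
    ext z
    rcases z with _ | z
    · simp [hnone]
    · have hzx : some z ∈ U → some z ≠ x := by
        rintro h rfl
        exact (hUno _ h).1 P.end_mem_support
      simp only [nbd, Finset.mem_sdiff, Finset.mem_map, Finset.mem_filter, Finset.mem_univ,
        true_and, Finset.mem_singleton, exists_eq_left, Function.Embedding.some_apply,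
        Option.some.injEq, exists_eq_right, hN, hWm]
      tauto
  have hS : SimpIn G W N := by
    rcases x with _ | x
    · have : N = W.filter (fun v => v ∈ K) := by
        rw [hN]
        ext v
        simp [addVertex_none]
      rw [this]
      exact simpIn_of_simplicial G K hK W
    · have hxW : x ∉ W := fun h => (hUno _ ((hWm x).1 h)).1 P.end_mem_support
      have : N = W.filter (fun v => G.Adj x v) := by
        rw [hN]
        ext v
        simp [addVertex_some, G.adj_comm]
      rw [this]
      apply simpIn_nbr G hc W x hxW
      have hnil : ¬ P.Nil := by
        intro h
        exact absurd h.eq (by simp)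
      have hadj := P.adj_penultimate hnil
      have hmem : P.penultimate ∈ P.support := P.getVert_mem_support _
      have hne := hadj.ne
      generalize P.penultimate = p at hadj hmem hne
      have hno : ∀ v ∈ W, ¬ (addVertex G K).Adj (some v) p := fun v hv => (hUno _ ((hWm v).1 hv)).2 p hmem hne
      have hno' : ∀ v ∈ W, some v ≠ p := by
        rintro v hv rfl
        exact (hUno _ ((hWm v).1 hv)).1 hmem
      rcases p with _ | p
      · have hxK : x ∈ K := (addVertex_none G K x).1 hadj.symm
        apply (hK.2 x hxK).subset
        rintro v ⟨h1, h2⟩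
        exact ⟨h1, fun h => hno v h2 ((addVertex_none G K v).2 h)⟩
      · rintro a ⟨ha1, ha2⟩ b ⟨hb1, hb2⟩ hab
        refine hc x p a b ((addVertex_some G K p x).1 hadj).symm ha1 hb1 hab
          (fun h => hno a ha2 ((addVertex_some G K _ _).2 h.symm))
          (fun h => hno b hb2 ((addVertex_some G K _ _).2 h.symm))
          (fun h => hno' a ha2 (by rw [h])) (fun h => hno' b hb2 (by rw [h]))
  rw [eN, eU, ip_map, ip_map]
  exact main_ind k hk G hc hclique hsimp lam hlam _ W N rfl hS
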